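/- For every n ≥ 0, the quasi-greedy β_{3·2ⁿ}-expansion of 1 equals the periodic sequence (t_{n+1})^∞, i.e. δ(β_{3·2ⁿ}) = t_{n+1}^∞. -/

import Mathlib

open Filter Set

noncomputable section

namespace FatSierpinski

/-- The digit set Ω = {(0,0),(1,0),(0,1)} ⊆ ℝ². -/
def OmegaR : Set (ℝ × ℝ) := {(0, 0), (1, 0), (0, 1)}

/-- The fat Sierpinski gasket `S_β` (sequences are 0-indexed: `d i` is the digit d_{i+1}). -/
def Sfat (β : ℝ) : Set (ℝ × ℝ) :=
  {x | ∃ d : ℕ → ℝ × ℝ, (∀ i, d i ∈ OmegaR) ∧ x = ∑' i : ℕ, (β ^ (i + 1))⁻¹ • d i}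

/-- The convex hull `Δ_β` of `S_β`. -/
def Delta (β : ℝ) : Set (ℝ × ℝ) := convexHull ℝ (Sfat β)

/-- The map `f_d(x) = (x + d)/β`. -/
def fmap (β : ℝ) (d : ℝ × ℝ) (x : ℝ × ℝ) : ℝ × ℝ := β⁻¹ • (x + d)

/-- The overlap region `O_β = ⋃_{c ≠ d ∈ Ω} f_c(Δ_β) ∩ f_d(Δ_β)`. -/
def Ofat (β : ℝ) : Set (ℝ × ℝ) :=
  ⋃ c ∈ OmegaR, ⋃ d ∈ OmegaR, ⋃ (_ : c ≠ d), (fmap β c '' Delta β) ∩ (fmap β d '' Delta β)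

/-- The univoque set of codings `𝐔_β`. -/
def Ufat (β : ℝ) : Set (ℕ → ℝ × ℝ) :=
  {d | (∀ i, d i ∈ OmegaR) ∧
    ∀ n : ℕ, (∑' i : ℕ, (β ^ (i + 1))⁻¹ • d (n + i)) ∉ Ofat β}

/-- `d` has smallest period `k`. -/
def SmallestPeriod {α : Type*} (d : ℕ → α) (k : ℕ) : Prop :=
  0 < k ∧ (∀ i, d (i + k) = d i) ∧ ∀ j, 0 < j → j < k → ∃ i, d (i + j) ≠ d i

/-- The critical base `β_k`. -/
def betaK (k : ℕ) : ℝ :=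
  sInf {β : ℝ | β ∈ Set.Ioc (1 : ℝ) 2 ∧ ∃ d ∈ Ufat β, SmallestPeriod d k}

/-- Strict lexicographic order on sequences. -/
def seqLT {α : Type*} [Preorder α] (a b : ℕ → α) : Prop :=
  ∃ n, (∀ i < n, a i = b i) ∧ a n < b n

/-- Weak lexicographic order on sequences. -/
def seqLE {α : Type*} [Preorder α] (a b : ℕ → α) : Prop :=
  seqLT a b ∨ a = b

/-- `a` is a 0-1 sequence. -/
def IsBinary (a : ℕ → ℕ) : Prop := ∀ i, a i ≤ 1

/-- `a` does not end with `0^∞`. -/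
def NotEndInZeros (a : ℕ → ℕ) : Prop := ∀ N, ∃ i, N ≤ i ∧ a i ≠ 0

/-- `∑_{i=1}^∞ a_i β^{-i} = 1` (0-indexed: `a i` is a_{i+1}). -/
def SumsToOne (β : ℝ) (a : ℕ → ℕ) : Prop :=
  ∑' i : ℕ, (a i : ℝ) / β ^ (i + 1) = 1

/-- `a` is the quasi-greedy β-expansion of 1: the lexicographically largest
binary sequence not ending in `0^∞` whose value in base β is 1. -/
def IsQuasiGreedy (β : ℝ) (a : ℕ → ℕ) : Prop :=
  IsBinary a ∧ NotEndInZeros a ∧ SumsToOne β a ∧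
    ∀ b : ℕ → ℕ, IsBinary b → NotEndInZeros b → SumsToOne β b → seqLE b a

/-- `w⁺`: replace the final digit 0 of a block by 1. -/
def plusBlock (w : List ℕ) : List ℕ := w.dropLast ++ [1]

/-- `Θ` flips the outer digits of every consecutive triple
(000↦101, 001↦100, 100↦001, 101↦000). -/
def thetaBlock (w : List ℕ) : List ℕ :=
  w.mapIdx fun i x => if i % 3 = 1 then x else 1 - x

/-- `tB n` is the block `t_{n+1}`: `t_1 = 100`, `t_{n+1} = t_n⁺ Θ(t_n⁺)`. -/
def tB : ℕ → List ℕ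
  | 0 => [1, 0, 0]
  | n + 1 => plusBlock (tB n) ++ thetaBlock (plusBlock (tB n))

/-- The sequence `u w^∞` (the block `u` followed by `w` repeated forever). -/
def prefixPeriodic (u w : List ℕ) : ℕ → ℕ := fun i =>
  if i < u.length then u.getD i 0 else w.getD ((i - u.length) % w.length) 0

/-- The periodic sequence `w^∞`. -/
def periodicSeq (w : List ℕ) : ℕ → ℕ := fun i => w.getD (i % w.length) 0

/-- The componentwise limit `λ = 101001000101…` of the blocks `t_n`
(the digit `λ_{i+1}` has stabilized in `t_{i+2} = tB (i+1)`). -/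
def lamSeq : ℕ → ℕ := fun i => (tB (i + 1)).getD i 0

/-- `β_c` is the unique base in (1,2] with `∑ λ_i β^{-i} = 1`. -/
def IsBetaC (β : ℝ) : Prop := β ∈ Set.Ioc (1 : ℝ) 2 ∧ SumsToOne β lamSeq

/-- The sequence `t_{n+2}⁺ (Θ(t_{n+2}))^∞`, the quasi-greedy expansion of 1 for `β̂_n`. -/
def hatSeq (n : ℕ) : ℕ → ℕ :=
  prefixPeriodic (plusBlock (tB (n + 1))) (thetaBlock (tB (n + 1)))

/-- The Sharkovskii ordering `k ⊳ ℓ` on positive integers. -/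
def Sharkovskii (k l : ℕ) : Prop :=
  ∃ a b c d : ℕ, k = 2 ^ a * (2 * b + 1) ∧ l = 2 ^ c * (2 * d + 1) ∧ k ≠ l ∧
    ((1 ≤ b ∧ d = 0) ∨ (1 ≤ b ∧ 1 ≤ d ∧ (a < c ∨ (a = c ∧ b < d))) ∨
      (b = 0 ∧ d = 0 ∧ c < a))

/-- The digit set Ω as pairs of naturals (for combinatorial statements). -/
def OmegaD : Set (ℕ × ℕ) := {(0, 0), (1, 0), (0, 1)}

/-- The periodic extension `(d_1 … d_k)^∞` of a block. -/
def cyc (d : List (ℕ × ℕ)) : ℕ → ℕ × ℕ := fun i => d.getD (i % d.length) (0, 0)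

/-- Strict lexicographic order on lists. -/
def listLT (u v : List ℕ) : Prop := List.Lex (· < ·) u v

/-- Weak lexicographic order on lists. -/
def listLE (u v : List ℕ) : Prop := listLT u v ∨ u = v

/-- The first components `d_1¹ … d_k¹` of a block over Ω. -/
def comp1 (d : List (ℕ × ℕ)) : List ℕ := d.map Prod.fst

/-- The second components `d_1² … d_k²` of a block over Ω. -/
def comp2 (d : List (ℕ × ℕ)) : List ℕ := d.map Prod.snd

/-- The digits `(1 - d_1⁺) … (1 - d_k⁺)` where `d⁺ = d¹ + d²`. -/
def comp3 (d : List (ℕ × ℕ)) : List ℕ := d.map fun x => 1 - x.1 - x.2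

/-- Cyclic shift of a list by `j`. -/
def rot {α : Type*} (j : ℕ) (l : List α) : List α := l.drop j ++ l.take j

/-- `d` is a representation of the binary block `a`. -/
def IsRepresentation (a : List ℕ) (d : List (ℕ × ℕ)) : Prop :=
  d.length = a.length ∧ (∀ x ∈ d, x ∈ OmegaD) ∧
  SmallestPeriod (cyc d) a.length ∧
  comp1 d = a ∧ listLE (comp3 d) (comp2 d) ∧ listLE (comp2 d) a ∧
  ∀ j < a.length,
    listLE (comp1 (rot j d)) a ∧ listLE (comp2 (rot j d)) a ∧ listLE (comp3 (rot j d)) a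

/-- A binary block is admissible if it has a representation. -/
def IsAdmissible (a : List ℕ) : Prop := ∃ d, IsRepresentation a d

/-- The `i`-th consecutive triple of a block (0-indexed). -/
def tripleAt (a : List ℕ) (i : ℕ) : List ℕ :=
  [a.getD (3 * i) 0, a.getD (3 * i + 1) 0, a.getD (3 * i + 2) 0]

/-- The edges of the directed graph on {000, 001, 100, 101} defining the subshift `X`. -/
def XEdge (u v : List ℕ) : Prop :=
  (u, v) ∈ ({([1,0,1], [0,0,1]), ([1,0,1], [0,0,0]), ([0,0,1], [0,0,0]),
             ([0,0,0], [1,0,1]), ([0,0,0], [1,0,0]), ([1,0,0], [1,0,1])} :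
      Set (List ℕ × List ℕ))




/-- shift -/
def sh (n : ℕ) (x : ℕ → ℕ) : ℕ → ℕ := fun i => x (n + i)

/-- value in base β -/
def val (β : ℝ) (x : ℕ → ℕ) : ℝ := ∑' i : ℕ, (x i : ℝ) / β ^ (i + 1)

lemma seqLT_tri (x y : ℕ → ℕ) : seqLT x y ∨ x = y ∨ seqLT y x := by
  by_cases h : x = y
  · exact Or.inr (Or.inl h)
  · have h' : ∃ i, x i ≠ y i := by
      by_contra hc
      push Not at hc
      exact h (funext hc)
    classical
    have hs := Nat.find_spec h'
    have hm : ∀ i < Nat.find h', x i = y i := fun i hi => by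
      have := Nat.find_min h' hi
      simpa using this
    rcases lt_or_gt_of_ne hs with h1 | h1
    · exact Or.inl ⟨_, hm, h1⟩
    · exact Or.inr (Or.inr ⟨_, fun i hi => (hm i hi).symm, h1⟩)

lemma seqLT_irrefl (x : ℕ → ℕ) : ¬ seqLT x x := fun ⟨_, _, h⟩ => lt_irrefl _ h

lemma seqLT_asymm {x y : ℕ → ℕ} (h : seqLT x y) (h' : seqLT y x) : False := by
  obtain ⟨n, h1, h2⟩ := h
  obtain ⟨m, h3, h4⟩ := h'
  rcases lt_trichotomy n m with h | h | h
  · have := h3 n h; omega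
  · subst h; omega
  · have := h1 m h; omega

lemma sh_sh (m n : ℕ) (x : ℕ → ℕ) : sh m (sh n x) = sh (n + m) x := by
  funext i; simp [sh, add_assoc]

lemma sh_zero (x : ℕ → ℕ) : sh 0 x = x := by
  funext i; simp [sh]

lemma sh_bin {x : ℕ → ℕ} (hx : IsBinary x) (n : ℕ) : IsBinary (sh n x) := fun i => hx _

lemma geo_summable {β : ℝ} (hβ : 1 < β) : Summable (fun i : ℕ => 1 / β ^ (i + 1)) := by
  have h : Summable (fun i : ℕ => (β⁻¹) ^ i) :=
    summable_geometric_of_lt_one (by positivity) (inv_lt_one_of_one_lt₀ hβ)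
  have := (summable_nat_add_iff 1).2 h
  refine this.congr fun i => ?_
  simp

lemma geo_sum {β : ℝ} (hβ : 1 < β) : ∑' i : ℕ, 1 / β ^ (i + 1) = 1 / (β - 1) := by
  have h : ∑' i : ℕ, (β⁻¹) ^ i = (1 - β⁻¹)⁻¹ :=
    tsum_geometric_of_lt_one (by positivity) (inv_lt_one_of_one_lt₀ hβ)
  have h2 : ∀ i : ℕ, 1 / β ^ (i + 1) = β⁻¹ * (β⁻¹) ^ i := fun i => by
    rw [pow_succ, one_div, mul_inv, mul_comm, inv_pow]
  simp_rw [h2]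
  rw [tsum_mul_left, h]
  have : β - 1 ≠ 0 := by linarith
  have : β ≠ 0 := by linarith
  field_simp

lemma val_summable {β : ℝ} (hβ : 1 < β) {x : ℕ → ℕ} (hx : IsBinary x) :
    Summable (fun i : ℕ => (x i : ℝ) / β ^ (i + 1)) := by
  refine Summable.of_nonneg_of_le (fun i => by positivity) (fun i => ?_) (geo_summable hβ)
  have : (x i : ℝ) ≤ 1 := by exact_mod_cast hx i
  gcongr

lemma val_nonneg {β : ℝ} (hβ : 1 < β) (x : ℕ → ℕ) : 0 ≤ val β x :=
  tsum_nonneg fun i => by positivity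

lemma val_le {β : ℝ} (hβ : 1 < β) {x : ℕ → ℕ} (hx : IsBinary x) : val β x ≤ 1 / (β - 1) := by
  rw [← geo_sum hβ]
  refine (val_summable hβ hx).tsum_le_tsum (fun i => ?_) (geo_summable hβ)
  have : (x i : ℝ) ≤ 1 := by exact_mod_cast hx i
  gcongr

lemma val_split {β : ℝ} (hβ : 1 < β) {x : ℕ → ℕ} (hx : IsBinary x) (m : ℕ) :
    val β x = ∑ i ∈ Finset.range m, (x i : ℝ) / β ^ (i + 1) + val β (sh m x) / β ^ m := by
  unfold val
  rw [← (val_summable hβ hx).sum_add_tsum_nat_add m, ← tsum_div_const]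
  congr 1
  refine tsum_congr fun i => ?_
  have : β ≠ 0 := by linarith
  simp only [sh]
  rw [show m + i = i + m by ring, show i + m + 1 = (i + 1) + m by ring, pow_add]
  field_simp

lemma val_cons {β : ℝ} (hβ : 1 < β) {x : ℕ → ℕ} (hx : IsBinary x) :
    val β x = (x 0 + val β (sh 1 x)) / β := by
  rw [val_split hβ hx 1]
  simp
  ring

lemma val_anti {β γ : ℝ} (hβ : 1 < β) (h : β ≤ γ) {x : ℕ → ℕ} (hx : IsBinary x) :
    val γ x ≤ val β x := by
  refine (val_summable (hβ.trans_le h) hx).tsum_le_tsum (fun i => ?_) (val_summable hβ hx)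
  have : 0 < β := by linarith
  gcongr

lemma val_strictAnti {β γ : ℝ} (hβ : 1 < β) (h : β < γ) {x : ℕ → ℕ} (hx : IsBinary x)
    {m : ℕ} (hm : x m ≠ 0) : val γ x < val β x := by
  have h0 : 0 < β := by linarith
  refine Summable.tsum_lt_tsum (i := m) (fun i => ?_) ?_ (val_summable (hβ.trans h) hx)
    (val_summable hβ hx)
  · show (x i : ℝ) / γ ^ (i + 1) ≤ (x i : ℝ) / β ^ (i + 1)
    gcongr
  · have : 0 < (x m : ℝ) := by exact_mod_cast Nat.pos_of_ne_zero hm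
    gcongr

lemma val_pos {β : ℝ} (hβ : 1 < β) {x : ℕ → ℕ} (hx : IsBinary x)
    {m : ℕ} (hm : x m ≠ 0) : 0 < val β x := by
  have h0 : 0 < β := by linarith
  have : 0 < (x m : ℝ) := by exact_mod_cast Nat.pos_of_ne_zero hm
  exact (val_summable hβ hx).tsum_pos (fun i => by positivity) m (by positivity)

/-- difference formula at the first disagreement -/
lemma val_diff {β : ℝ} (hβ : 1 < β) {x y : ℕ → ℕ} (hx : IsBinary x) (hy : IsBinary y)
    {m : ℕ} (h : ∀ i < m, x i = y i) (hxm : x m = 0) (hym : y m = 1) :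
    val β y - val β x =
      (1 + val β (sh (m + 1) y) - val β (sh (m + 1) x)) / β ^ (m + 1) := by
  rw [val_split hβ hx (m + 1), val_split hβ hy (m + 1), Finset.sum_range_succ,
    Finset.sum_range_succ]
  have : ∑ i ∈ Finset.range m, (x i : ℝ) / β ^ (i + 1)
      = ∑ i ∈ Finset.range m, (y i : ℝ) / β ^ (i + 1) := by
    refine Finset.sum_congr rfl fun i hi => ?_
    rw [h i (Finset.mem_range.1 hi)]
  rw [this, hxm, hym]
  push_cast
  ring

/-- if all shifts of `x` are lexicographically at most `a` and `val a = 1`, then `val x ≤ 1`. -/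
lemma val_le_one {β : ℝ} (hβ : 1 < β) {a x : ℕ → ℕ} (ha : IsBinary a) (hx : IsBinary x)
    (ha1 : val β a = 1) (h : ∀ n, seqLE (sh n x) a) : val β x ≤ 1 := by
  set V : ℝ := ⨆ n, val β (sh n x) with hV
  have hbdd : BddAbove (Set.range fun n => val β (sh n x)) :=
    ⟨1 / (β - 1), by rintro _ ⟨n, rfl⟩; exact val_le hβ (sh_bin hx n)⟩
  have hle : ∀ n, val β (sh n x) ≤ V := fun n => le_ciSup hbdd n
  by_contra hcon
  push Not at hcon
  have hV1 : 1 < V := by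
    have := hle 0
    rw [sh_zero] at this
    linarith
  have h0 : 0 < β := by linarith
  have key : ∀ n, val β (sh n x) ≤ 1 + (V - 1) / β := by
    intro n
    rcases h n with ⟨m, h1, h2⟩ | h1
    · have hb := ha m
      have hd := val_diff hβ (sh_bin hx n) ha h1 (by omega) (by omega)
      rw [ha1, sh_sh] at hd
      have h3 := hle (n + (m + 1))
      have h4 := val_nonneg hβ (sh (m + 1) a)
      have h5 : (1 - V) / β ^ (m + 1) ≤ 1 - val β (sh n x) := by
        rw [hd]
        gcongr
        linarith
      have h6 : (V - 1) / β ^ (m + 1) ≤ (V - 1) / β := by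
        apply div_le_div_of_nonneg_left (by linarith) h0
        exact le_self_pow₀ hβ.le (by omega)
      have h7 : (1 - V) / β ^ (m + 1) = - ((V - 1) / β ^ (m + 1)) := by ring
      linarith
    · rw [h1, ha1]
      have : 0 ≤ (V - 1) / β := div_nonneg (by linarith) h0.le
      linarith
  have : V ≤ 1 + (V - 1) / β := ciSup_le key
  have h8 : (V - 1) / β < V - 1 := div_lt_self (by linarith) hβ
  linarith

/-- if `x > a` then `val x ≥ 1 + tail`. -/
lemma one_le_val {β : ℝ} (hβ : 1 < β) {a x : ℕ → ℕ} (ha : IsBinary a) (hx : IsBinary x)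
    (ha1 : val β a = 1) (h : ∀ n, seqLE (sh n a) a) (hlt : seqLT a x) :
    ∃ m, 1 + val β (sh m x) / β ^ m ≤ val β x := by
  obtain ⟨m, h1, h2⟩ := hlt
  have hb := hx m
  have hd := val_diff hβ ha hx h1 (by omega) (by omega)
  refine ⟨m + 1, ?_⟩
  have h3 : val β (sh (m + 1) a) ≤ 1 := by
    refine val_le_one hβ ha (sh_bin ha _) ha1 fun n => ?_
    rw [sh_sh]; exact h _
  have h4 : val β (sh (m + 1) x) / β ^ (m + 1) ≤ val β x - val β a := by
    rw [hd]
    have h0 : 0 < β := by linarith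
    gcongr
    linarith
  linarith

lemma quasiGreedy_of {β : ℝ} (hβ : 1 < β) {a : ℕ → ℕ} (ha : IsBinary a)
    (hz : NotEndInZeros a) (ha1 : val β a = 1) (h : ∀ n, seqLE (sh n a) a) :
    IsQuasiGreedy β a := by
  refine ⟨ha, hz, ha1, fun b hb hbz hb1 => ?_⟩
  rcases seqLT_tri b a with h1 | h1 | h1
  · exact Or.inl h1
  · exact Or.inr h1
  · exfalso
    obtain ⟨m, hm⟩ := one_le_val hβ ha hb ha1 h h1
    obtain ⟨i, hi, hi0⟩ := hbz m
    have : 0 < val β (sh m b) := val_pos hβ (sh_bin hb m) (m := i - m) (by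
      simp only [sh]; rwa [show m + (i - m) = i by omega])
    have h0 : 0 < β := by linarith
    have h2 : 0 < val β (sh m b) / β ^ m := by positivity
    have h3 : val β b = 1 := hb1
    linarith

/-- existence of the base for a periodic sequence -/
lemma exists_base {k : ℕ} {a : ℕ → ℕ} (hk : 0 < k) (ha : IsBinary a)
    (hp : ∀ i, a (i + k) = a i) (h0 : a 0 = 1) (h1 : ∃ i < k, a i = 0) :
    ∃ β : ℝ, 1 < β ∧ β < 2 ∧ val β a = 1 := by
  let P : ℝ → ℝ := fun β => ∑ i ∈ Finset.range k, (a i : ℝ) * β ^ (k - 1 - i) - (β ^ k - 1)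
  have hc : ContinuousOn P (Set.Icc 1 2) := by
    apply Continuous.continuousOn; fun_prop
  have hP1 : 0 < P 1 := by
    simp only [P, one_pow, mul_one, sub_self, sub_zero]
    have : (a 0 : ℝ) ≤ ∑ i ∈ Finset.range k, (a i : ℝ) :=
      Finset.single_le_sum (f := fun i => (a i : ℝ)) (fun i _ => by positivity)
        (Finset.mem_range.2 hk)
    rw [h0] at this
    push_cast at this
    linarith
  have hP2 : P 2 < 0 := by
    simp only [P]
    have hs : ∑ i ∈ Finset.range k, (2 : ℝ) ^ (k - 1 - i) = 2 ^ k - 1 := by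
      rw [Finset.sum_range_reflect (fun i => (2 : ℝ) ^ i) k, geom_sum_eq (by norm_num)]
      norm_num
    rw [← hs, sub_neg]
    obtain ⟨i, hi, hi0⟩ := h1
    refine Finset.sum_lt_sum (fun i _ => ?_) ⟨i, Finset.mem_range.2 hi, ?_⟩
    · have : (a i : ℝ) ≤ 1 := by exact_mod_cast ha i
      exact mul_le_of_le_one_left (by positivity) this
    · rw [hi0]; simp
  obtain ⟨β, hβ, hβ0⟩ := intermediate_value_Icc' (by norm_num) hc ⟨hP2.le, hP1.le⟩
  have hb1 : 1 < β := by
    rcases hβ.1.eq_or_lt with h | h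
    · rw [← h] at hβ0; linarith
    · exact h
  have hb2 : β < 2 := by
    rcases hβ.2.eq_or_lt with h | h
    · rw [h] at hβ0; linarith
    · exact h
  refine ⟨β, hb1, hb2, ?_⟩
  have hs := val_split hb1 ha k
  have hsh : sh k a = a := by
    funext i; simp only [sh]; rw [add_comm]; exact hp i
  rw [hsh] at hs
  have hpos : 0 < β := by linarith
  have hsum : ∑ i ∈ Finset.range k, (a i : ℝ) / β ^ (i + 1)
      = (∑ i ∈ Finset.range k, (a i : ℝ) * β ^ (k - 1 - i)) / β ^ k := by
    rw [Finset.sum_div]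
    refine Finset.sum_congr rfl fun i hi => ?_
    have hi := Finset.mem_range.1 hi
    rw [div_eq_div_iff (by positivity) (by positivity), mul_assoc, ← pow_add]
    congr 2
    omega
  have hPe : ∑ i ∈ Finset.range k, (a i : ℝ) * β ^ (k - 1 - i) = β ^ k - 1 := by
    have : P β = 0 := hβ0
    simp only [P] at this
    linarith
  rw [hsum, hPe] at hs
  have hbk : 1 < β ^ k := one_lt_pow₀ hb1 (by omega)
  have hne : β ^ k ≠ 0 := by positivity
  field_simp at hs
  have : (val β a - 1) * (β ^ k - 1) = 0 := by linarith
  rcases mul_eq_zero.1 this with h | h <;> linarith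


/-- indicator of component `j` -/
def ind (D : ℕ → Fin 3) (j : Fin 3) : ℕ → ℕ := fun i => if D i = j then 1 else 0

/-- the digit vectors -/
def dig (j : Fin 3) : ℝ × ℝ := if j = 0 then (1, 0) else if j = 1 then (0, 1) else (0, 0)

lemma ind_bin (D : ℕ → Fin 3) (j : Fin 3) : IsBinary (ind D j) := fun i => by
  unfold ind; split <;> omega

lemma dig_mem (j : Fin 3) : dig j ∈ OmegaR := by
  fin_cases j <;> simp [dig, OmegaR]

lemma dig_inj {i j : Fin 3} (h : dig i = dig j) : i = j := by
  fin_cases i <;> fin_cases j <;> simp_all [dig]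

lemma exists_dig {x : ℝ × ℝ} (h : x ∈ OmegaR) : ∃ j, x = dig j := by
  simp only [OmegaR, Set.mem_insert_iff, Set.mem_singleton_iff] at h
  rcases h with h | h | h
  · exact ⟨2, by simp [h, dig]⟩
  · exact ⟨0, by simp [h, dig]⟩
  · exact ⟨1, by simp [h, dig]⟩

/-- barycentric-type coordinates of a point -/
def crd (β : ℝ) (p : ℝ × ℝ) (j : Fin 3) : ℝ :=
  if j = 0 then p.1 else if j = 1 then p.2 else 1 / (β - 1) - p.1 - p.2

lemma sum_dig {β : ℝ} (hβ : 1 < β) (D : ℕ → Fin 3) :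
    ∑' i : ℕ, (β ^ (i + 1))⁻¹ • dig (D i) = (val β (ind D 0), val β (ind D 1)) := by
  have h0 := (val_summable hβ (ind_bin D 0)).hasSum
  have h1 := (val_summable hβ (ind_bin D 1)).hasSum
  have h := h0.prodMk h1
  refine Eq.trans (tsum_congr fun i => ?_) h.tsum_eq
  unfold ind dig
  generalize D i = j
  fin_cases j <;> simp

lemma val_sum {β : ℝ} (hβ : 1 < β) (D : ℕ → Fin 3) :
    val β (ind D 0) + val β (ind D 1) + val β (ind D 2) = 1 / (β - 1) := by
  have h0 := (val_summable hβ (ind_bin D 0)).hasSum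
  have h1 := (val_summable hβ (ind_bin D 1)).hasSum
  have h2 := (val_summable hβ (ind_bin D 2)).hasSum
  have h := (h0.add h1).add h2
  rw [← geo_sum hβ]
  refine Eq.trans h.tsum_eq.symm (tsum_congr fun i => ?_)
  unfold ind
  generalize D i = j
  fin_cases j <;> simp

lemma crd_sum {β : ℝ} (hβ : 1 < β) (D : ℕ → Fin 3) (j : Fin 3) :
    crd β (∑' i : ℕ, (β ^ (i + 1))⁻¹ • dig (D i)) j = val β (ind D j) := by
  rw [sum_dig hβ]
  have := val_sum hβ D
  fin_cases j <;> simp [crd]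
  rw [← one_div]
  linarith

lemma mem_Delta {β : ℝ} (hβ : 1 < β) (p : ℝ × ℝ) :
    p ∈ Delta β ↔ ∀ j, 0 ≤ crd β p j := by
  have hb : 0 < β - 1 := by linarith
  constructor
  · intro hp
    have hconv : Convex ℝ {q : ℝ × ℝ | ∀ j, 0 ≤ crd β q j} := by
      intro x hx y hy s t hs ht hst j
      have hxj := hx j
      have hyj := hy j
      have : crd β (s • x + t • y) j = s * crd β x j + t * crd β y j := by
        fin_cases j <;> simp [crd]
        have : t = 1 - s := by linarith
        subst this
        ring
      rw [this]
      positivity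
    refine convexHull_min ?_ hconv hp
    rintro x ⟨d, hd, rfl⟩ j
    choose D hD using fun i => exists_dig (hd i)
    simp_rw [hD]
    rw [crd_sum hβ]
    exact val_nonneg hβ _
  · intro h
    have hv : ∀ j : Fin 3, (1 / (β - 1)) • dig j ∈ Sfat β := by
      intro j
      refine ⟨fun _ => dig j, fun _ => dig_mem j, ?_⟩
      rw [(by simpa using (geo_summable hβ) : Summable fun i : ℕ => (β ^ (i + 1))⁻¹).tsum_smul_const]
      congr 1
      rw [← geo_sum hβ]
      simp
    have hx := h 0
    have hy := h 1
    have hz := h 2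
    simp [crd] at hx hy hz
    have hc := convex_convexHull ℝ (Sfat β)
    have := hc.sum_mem (t := Finset.univ) (w := fun j : Fin 3 => (β - 1) * crd β p j)
      (z := fun j => (1 / (β - 1)) • dig j) (fun j _ => mul_nonneg hb.le (h j)) (by
        simp [Fin.sum_univ_three, crd]
        field_simp
        ring) (fun j _ => subset_convexHull ℝ _ (hv j))
    unfold Delta
    convert this using 1

    simp [Fin.sum_univ_three, crd, dig]
    ext <;> simp <;> field_simp

lemma mem_fmap {β : ℝ} (hβ : 1 < β) (p : ℝ × ℝ) (c : Fin 3) (hp : ∀ j, 0 ≤ crd β p j) :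
    p ∈ fmap β (dig c) '' Delta β ↔ 1 / β ≤ crd β p c := by
  have h0 : 0 < β := by linarith
  have hb : 0 < β - 1 := by linarith
  have hcr : ∀ j, crd β (β • p - dig c) j = β * crd β p j - if j = c then 1 else 0 := by
    intro j
    fin_cases j <;> fin_cases c <;> simp [crd, dig] <;> field_simp <;> ring
  have : p ∈ fmap β (dig c) '' Delta β ↔ β • p - dig c ∈ Delta β := by
    constructor
    · rintro ⟨q, hq, rfl⟩
      unfold fmap
      rw [smul_smul, mul_inv_cancel₀ h0.ne', one_smul]
      simpa using hq
    · intro h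
      refine ⟨_, h, ?_⟩
      unfold fmap
      rw [sub_add_cancel, smul_smul, inv_mul_cancel₀ h0.ne', one_smul]
  rw [this, mem_Delta hβ]
  constructor
  · intro h
    have := h c
    rw [hcr, if_pos rfl] at this
    rw [div_le_iff₀ h0]
    linarith
  · intro h j
    rw [hcr]
    split_ifs with hj
    · subst hj
      rw [div_le_iff₀ h0] at h
      linarith
    · have := hp j
      have : 0 ≤ β * crd β p j := by positivity
      linarith

lemma mem_Ufat {β : ℝ} (hβ : 1 < β) (D : ℕ → Fin 3) :
    (fun i => dig (D i)) ∈ Ufat β ↔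
      ∀ n j, D n ≠ j → val β (sh (n + 1) (ind D j)) < 1 := by
  have h0 : 0 < β := by linarith
  have hcr : ∀ n j, crd β (∑' i : ℕ, (β ^ (i + 1))⁻¹ • dig (D (n + i))) j
      = val β (sh n (ind D j)) := fun n j => crd_sum hβ (fun i => D (n + i)) j
  have hnn : ∀ n j, 0 ≤ crd β (∑' i : ℕ, (β ^ (i + 1))⁻¹ • dig (D (n + i))) j :=
    fun n j => by rw [hcr]; exact val_nonneg hβ _
  have hstep : ∀ n j, val β (sh n (ind D j)) =
      ((if D n = j then 1 else 0) + val β (sh (n + 1) (ind D j))) / β := by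
    intro n j
    rw [val_cons hβ (sh_bin (ind_bin D j) n), sh_sh]
    congr 2
    simp [sh, ind]
  have hone : ∀ n j, 1 / β ≤ val β (sh n (ind D j)) ↔
      D n = j ∨ 1 ≤ val β (sh (n + 1) (ind D j)) := by
    intro n j
    rw [hstep, div_le_div_iff_of_pos_right h0]
    have := val_nonneg hβ (sh (n + 1) (ind D j))
    by_cases h : D n = j
    · simp [h, this]
    · simp [h]
  have hO : ∀ n, (∑' i : ℕ, (β ^ (i + 1))⁻¹ • dig (D (n + i))) ∈ Ofat β ↔
      ∃ j, D n ≠ j ∧ 1 ≤ val β (sh (n + 1) (ind D j)) := by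
    intro n
    constructor
    · intro h
      simp only [Ofat, Set.mem_iUnion] at h
      obtain ⟨c, hc, e, he, hce, h1, h2⟩ := h
      obtain ⟨c, rfl⟩ := exists_dig hc
      obtain ⟨e, rfl⟩ := exists_dig he
      rw [mem_fmap hβ _ _ (hnn n), hcr, hone] at h1 h2
      by_cases hn : D n = c
      · refine ⟨e, ?_, ?_⟩
        · rintro rfl; exact hce (by rw [hn])
        · rcases h2 with h2 | h2
          · exact absurd (by rw [← hn, h2]) hce
          · exact h2
      · exact ⟨c, hn, h1.resolve_left hn⟩
    · rintro ⟨j, hj, hv⟩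
      simp only [Ofat, Set.mem_iUnion]
      refine ⟨dig (D n), dig_mem _, dig j, dig_mem _, fun h => hj (dig_inj h), ?_, ?_⟩
      · rw [mem_fmap hβ _ _ (hnn n), hcr, hone]; exact Or.inl rfl
      · rw [mem_fmap hβ _ _ (hnn n), hcr, hone]; exact Or.inr hv
  constructor
  · rintro ⟨_, h⟩ n j hj
    by_contra hc
    exact h n ((hO n).2 ⟨j, hj, not_lt.1 hc⟩)
  · intro h
    refine ⟨fun i => dig_mem _, fun n hn => ?_⟩
    obtain ⟨j, hj, hv⟩ := (hO n).1 hn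
    exact absurd (h n j hj) (not_lt.2 hv)


/-- periodic Thue–Morse sequences -/
def E : ℕ → ℕ → ℕ
  | 0, _ => 0
  | n + 1, i => if i % 2 = 0 then E n (i / 2) else 1 - E n (i / 2)

/-- complement -/
def flip (f : ℕ → ℕ) : ℕ → ℕ := fun i => 1 - f i

/-- Thue–Morse substitution -/
def th (f : ℕ → ℕ) : ℕ → ℕ := fun i => if i % 2 = 0 then f (i / 2) else 1 - f (i / 2)

/-- encoding of a binary sequence into triples -/
def Psi (f : ℕ → ℕ) : ℕ → ℕ := fun i =>
  if i % 3 = 0 then 1 - f (i / 3) else if i % 3 = 1 then 0 else f (i / 3 + 1)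

lemma E_succ (n : ℕ) : E (n + 1) = th (E n) := rfl

lemma th_even (f : ℕ → ℕ) (i : ℕ) : th f (2 * i) = f i := by
  simp [th]

lemma th_odd (f : ℕ → ℕ) (i : ℕ) : th f (2 * i + 1) = 1 - f i := by
  unfold th
  rw [if_neg (by omega), show (2 * i + 1) / 2 = i by omega]

lemma th_bin {f : ℕ → ℕ} (h : IsBinary f) : IsBinary (th f) := fun i => by
  unfold th; have := h (i / 2); split <;> omega

lemma flip_bin (f : ℕ → ℕ) : IsBinary (flip f) := fun i => by
  unfold flip; omega

lemma E_bin (n : ℕ) : IsBinary (E n) := by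
  induction n with
  | zero => intro i; simp [E]
  | succ n ih => rw [E_succ]; exact th_bin ih

lemma E_zero (n : ℕ) : E n 0 = 0 := by
  induction n with
  | zero => rfl
  | succ n ih => rw [E_succ]; simpa [th] using ih

lemma E_per (n i : ℕ) : E n (i + 2 ^ n) = E n i := by
  induction n generalizing i with
  | zero => rfl
  | succ n ih =>
    rw [E_succ]
    unfold th
    rw [show (i + 2 ^ (n + 1)) % 2 = i % 2 by omega,
      show (i + 2 ^ (n + 1)) / 2 = i / 2 + 2 ^ n by omega, ih]

lemma E_lt (n i : ℕ) (h : i < 2 ^ n) : E (n + 1) i = E n i := by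
  induction n generalizing i with
  | zero => simp at h; subst h; simp [E]
  | succ n ih =>
    rw [E_succ (n + 1)]
    unfold th
    rw [ih (i / 2) (by omega)]
    rfl

lemma E_ge (n i : ℕ) (h : i < 2 ^ n) : E (n + 1) (2 ^ n + i) = 1 - E n i := by
  induction n generalizing i with
  | zero => simp at h; subst h; simp [E]
  | succ n ih =>
    rw [E_succ (n + 1)]
    unfold th
    rw [show (2 ^ (n + 1) + i) % 2 = i % 2 by omega,
      show (2 ^ (n + 1) + i) / 2 = 2 ^ n + i / 2 by omega, ih (i / 2) (by omega), E_succ n]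
    unfold th
    split <;> rfl

lemma th_mono {u v : ℕ → ℕ} (h : seqLT u v) : seqLT (th u) (th v) := by
  obtain ⟨m, h1, h2⟩ := h
  refine ⟨2 * m, fun i hi => ?_, ?_⟩
  · unfold th; rw [h1 (i / 2) (by omega)]
  · rw [th_even, th_even]; exact h2

lemma th_reflect {u v : ℕ → ℕ} (h : seqLT (th u) (th v)) : seqLT u v := by
  rcases seqLT_tri u v with h1 | h1 | h1
  · exact h1
  · subst h1; exact absurd h (seqLT_irrefl _)
  · exact (seqLT_asymm h (th_mono h1)).elim

lemma sh_th (f : ℕ → ℕ) (i : ℕ) : sh (2 * i) (th f) = th (sh i f) := by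
  funext m
  unfold sh th
  rw [show (2 * i + m) % 2 = m % 2 by omega, show (2 * i + m) / 2 = i + m / 2 by omega]

lemma flip_th {f : ℕ → ℕ} (_ : IsBinary f) : flip (th f) = th (flip f) := by
  funext m
  unfold flip th
  split <;> rfl

lemma sh_flip (f : ℕ → ℕ) (i : ℕ) : sh i (flip f) = flip (sh i f) := rfl

lemma flip_flip {f : ℕ → ℕ} (h : IsBinary f) : flip (flip f) = f := by
  funext m; have := h m; unfold flip; omega

lemma Psi0 (f : ℕ → ℕ) (i : ℕ) : Psi f (3 * i) = 1 - f i := by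
  simp [Psi]

lemma Psi1 (f : ℕ → ℕ) (i : ℕ) : Psi f (3 * i + 1) = 0 := by
  unfold Psi; rw [if_neg (by omega), if_pos (by omega)]

lemma Psi2 (f : ℕ → ℕ) (i : ℕ) : Psi f (3 * i + 2) = f (i + 1) := by
  unfold Psi; rw [if_neg (by omega), if_neg (by omega), show (3 * i + 2) / 3 = i by omega]

lemma Psi_bin {f : ℕ → ℕ} (h : IsBinary f) : IsBinary (Psi f) := fun i => by
  unfold Psi; have := h (i / 3 + 1); split_ifs <;> omega

lemma sh_Psi (f : ℕ → ℕ) (i : ℕ) : sh (3 * i) (Psi f) = Psi (sh i f) := by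
  funext m
  unfold sh Psi
  rw [show (3 * i + m) % 3 = m % 3 by omega, show (3 * i + m) / 3 = i + m / 3 by omega]
  rfl

lemma Psi_mono {u v : ℕ → ℕ} (h0 : u 0 = v 0) (h : seqLT u v) : seqLT (Psi u) (Psi v) := by
  obtain ⟨m, h1, h2⟩ := h
  have hm : m ≠ 0 := by rintro rfl; omega
  obtain ⟨p, rfl⟩ : ∃ p, m = p + 1 := ⟨m - 1, by omega⟩
  refine ⟨3 * p + 2, fun i hi => ?_, ?_⟩
  · unfold Psi
    rw [h1 (i / 3) (by omega)]
    split_ifs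
    · rfl
    · rfl
    · rw [h1 (i / 3 + 1) (by omega)]
  · rw [Psi2, Psi2]; exact h2

lemma Psi_reflect {u v : ℕ → ℕ} (h0 : u 0 = v 0) (h : seqLT (Psi u) (Psi v)) : seqLT u v := by
  rcases seqLT_tri u v with h1 | h1 | h1
  · exact h1
  · subst h1; exact absurd h (seqLT_irrefl _)
  · exact (seqLT_asymm h (Psi_mono h0.symm h1)).elim

lemma Psi_monoLE {u v : ℕ → ℕ} (h0 : u 0 = v 0) (h : seqLE u v) : seqLE (Psi u) (Psi v) := by
  rcases h with h | h
  · exact Or.inl (Psi_mono h0 h)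
  · exact Or.inr (by rw [h])

/-- normalized shifts of the Thue–Morse sequences are at most the sequence -/
lemma E_shift_le (n i : ℕ) : (E n i = 0 → seqLE (sh i (E n)) (E n)) ∧
    (E n i = 1 → seqLE (flip (sh i (E n))) (E n)) := by
  induction n generalizing i with
  | zero =>
    refine ⟨fun _ => Or.inr (by funext m; rfl), fun h => by simp [E] at h⟩
  | succ n ih =>
    have hmono : ∀ {u v : ℕ → ℕ}, seqLE u v → seqLE (th u) (th v) := fun h => by
      rcases h with h | h
      · exact Or.inl (th_mono h)
      · exact Or.inr (by rw [h])
    rcases Nat.even_or_odd' i with ⟨p, rfl | rfl⟩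
    · rw [E_succ, th_even, sh_th, flip_th (sh_bin (E_bin n) p)]
      exact ⟨fun h => hmono ((ih p).1 h), fun h => hmono ((ih p).2 h)⟩
    · cases n with
      | zero =>
        have h1 : ∀ i, E 1 i = i % 2 := fun i => by simp [E]; split <;> omega
        refine ⟨fun h => ?_, fun h => Or.inr ?_⟩
        · rw [h1] at h; omega
        · funext m
          simp only [flip, sh, h1]; omega
      | succ n =>
        -- E (n+2) starts with 0 1 1 0
        have e0 : E (n + 2) 0 = 0 := E_zero _
        have e1 : E (n + 2) 1 = 1 := by
          rw [E_succ, show 1 = 2 * 0 + 1 by rfl, th_odd, E_zero]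
        have e2 : E (n + 2) 2 = 1 := by
          rw [E_succ, show 2 = 2 * 1 by rfl, th_even, E_succ, show 1 = 2 * 0 + 1 by rfl, th_odd,
            E_zero]
        have a0 := th_odd (E (n + 1)) p
        have a1 := th_even (E (n + 1)) (p + 1)
        have a2 := th_odd (E (n + 1)) (p + 1)
        rw [show 2 * (p + 1) = 2 * p + 1 + 1 by ring, ← E_succ] at a1
        rw [show 2 * (p + 1) + 1 = 2 * p + 1 + 2 by ring, ← E_succ] at a2
        rw [← E_succ] at a0
        have b1 := E_bin (n + 1) (p + 1)
        have b0 := E_bin (n + 1) p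
        have main : ∀ w : ℕ → ℕ, w 0 = 0 → w 1 + w 2 = 1 → seqLE w (E (n + 2)) := by
          intro w w0 w12
          left
          by_cases h : w 1 = 0
          · refine ⟨1, fun i hi => ?_, by omega⟩
            have : i = 0 := by omega
            subst this; omega
          · refine ⟨2, fun i hi => ?_, by omega⟩
            interval_cases i <;> omega
        refine ⟨fun h => main _ ?_ ?_, fun h => main _ ?_ ?_⟩
        · simpa [sh] using h
        · simp only [sh]; omega
        · simp only [sh, flip, add_zero]; omega
        · simp only [sh, flip]; omega

lemma E_pow (n : ℕ) : E (n + 1) (2 ^ n) = 1 := by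
  have := E_ge n 0 (by positivity)
  rw [E_zero] at this
  simpa using this

/-- digits of the blocks `tB n` -/
lemma tB_spec (n : ℕ) : (tB n).length = 3 * 2 ^ n ∧
    ∀ j < 3 * 2 ^ n, (tB n).getD j 0 = Psi (E n) j := by
  induction n with
  | zero =>
    refine ⟨rfl, fun j hj => ?_⟩
    simp at hj
    interval_cases j <;> simp [tB, Psi, E]
  | succ n ih =>
    obtain ⟨hl, hd⟩ := ih
    have hpos : 0 < 2 ^ n := by positivity
    have hpl : (plusBlock (tB n)).length = 3 * 2 ^ n := by
      simp [plusBlock, hl]; omega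
    have hpd : ∀ j < 3 * 2 ^ n, (plusBlock (tB n)).getD j 0 = Psi (E (n + 1)) j := by
      intro j hj
      by_cases hj2 : j = 3 * 2 ^ n - 1
      · have : j = 3 * (2 ^ n - 1) + 2 := by omega
        rw [this, Psi2, show 2 ^ n - 1 + 1 = 2 ^ n by omega, E_pow, ← this]
        unfold plusBlock
        rw [List.getD_append_right _ _ _ _ (by simp [hl]; omega)]
        simp [hl, hj2]
      · have h1 : Psi (E (n + 1)) j = Psi (E n) j := by
          unfold Psi
          rw [E_lt n (j / 3) (by omega)]
          split_ifs
          · rfl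
          · rfl
          · rw [E_lt n _ (by omega)]
        rw [h1, ← hd j hj]
        unfold plusBlock
        rw [List.getD_append _ _ _ _ (by simp [hl]; omega)]
        rw [List.getD_eq_getElem _ _ (by simp [hl]; omega),
          List.getD_eq_getElem _ _ (by omega)]
        simp
    have htl : (thetaBlock (plusBlock (tB n))).length = 3 * 2 ^ n := by
      simp [thetaBlock, hpl]
    refine ⟨?_, fun j hj => ?_⟩
    · simp only [tB, List.length_append, hpl, htl]; ring
    · simp only [tB]
      by_cases hj2 : j < 3 * 2 ^ n
      · rw [List.getD_append _ _ _ _ (by omega), hpd j hj2]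
      · obtain ⟨i, rfl⟩ : ∃ i, j = 3 * 2 ^ n + i := ⟨j - 3 * 2 ^ n, by omega⟩
        have hi : i < 3 * 2 ^ n := by rw [pow_succ] at hj; omega
        rw [List.getD_append_right _ _ _ _ (by omega), hpl, Nat.add_sub_cancel_left]
        have : (thetaBlock (plusBlock (tB n))).getD i 0 =
            if i % 3 = 1 then (plusBlock (tB n)).getD i 0
            else 1 - (plusBlock (tB n)).getD i 0 := by
          rw [List.getD_eq_getElem _ _ (by omega), List.getD_eq_getElem _ _ (by omega)]
          simp [thetaBlock]
        rw [this, hpd i hi]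
        unfold Psi
        rw [show (3 * 2 ^ n + i) % 3 = i % 3 by omega,
          show (3 * 2 ^ n + i) / 3 = 2 ^ n + i / 3 by omega, E_lt n (i / 3) (by omega),
          E_ge n (i / 3) (by omega)]
        have hb := E_bin n (i / 3)
        split_ifs
        · omega
        · omega
        · rfl
        · by_cases hi2 : i / 3 + 1 < 2 ^ n
          · rw [E_lt n _ hi2, add_assoc, E_ge n _ hi2]
          · have h3 : i / 3 + 1 = 2 ^ n := by omega
            rw [add_assoc, h3, E_pow, show 2 ^ n + 2 ^ n = 0 + 2 ^ (n + 1) by ring, E_per, E_zero]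

lemma Psi_per {f : ℕ → ℕ} {p : ℕ} (h : ∀ i, f (i + p) = f i) (i : ℕ) :
    Psi f (i + 3 * p) = Psi f i := by
  unfold Psi
  rw [show (i + 3 * p) % 3 = i % 3 by omega, show (i + 3 * p) / 3 = i / 3 + p by omega, h,
    show i / 3 + p + 1 = i / 3 + 1 + p by ring, h]

lemma per_mod {f : ℕ → ℕ} {p : ℕ} (h : ∀ i, f (i + p) = f i) (i : ℕ) : f (i % p) = f i := by
  have : Function.Periodic f p := h
  exact this.map_mod_nat i

lemma periodicSeq_eq (n : ℕ) : periodicSeq (tB n) = Psi (E n) := by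
  funext i
  obtain ⟨hl, hd⟩ := tB_spec n
  unfold periodicSeq
  rw [hl, hd _ (Nat.mod_lt _ (by positivity))]
  exact per_mod (Psi_per (E_per n)) i


/-- the optimal sequence -/
def Dst (n : ℕ) : ℕ → Fin 3 := fun i =>
  if i % 3 = 0 then (if E n (i / 3) = 0 then 0 else 1)
  else if i % 3 = 1 then 2 else (if E n (i / 3 + 1) = 1 then 0 else 1)

lemma ind_Dst0 (n : ℕ) : ind (Dst n) 0 = Psi (E n) := by
  funext i
  have h1 := E_bin n (i / 3)
  have h2 := E_bin n (i / 3 + 1)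
  unfold ind Dst Psi
  split_ifs <;> simp_all <;> omega

lemma ind_Dst1 (n : ℕ) : ind (Dst n) 1 = Psi (flip (E n)) := by
  funext i
  have h1 := E_bin n (i / 3)
  have h2 := E_bin n (i / 3 + 1)
  unfold ind Dst Psi flip
  split_ifs <;> simp_all <;> omega

lemma Dst_two (n i : ℕ) : Dst n i = 2 ↔ i % 3 = 1 := by
  unfold Dst
  split_ifs <;> simp_all

lemma seqLE_of_zero {x a : ℕ → ℕ} (h : x 0 = 0) (ha : a 0 = 1) : seqLE x a :=
  Or.inl ⟨0, fun i hi => by omega, by omega⟩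

lemma Psi_zero (n : ℕ) : Psi (E n) 0 = 1 := by
  simp [Psi, E_zero]

lemma E_one (n : ℕ) : E (n + 1) 1 = 1 := by
  rw [E_succ, show 1 = 2 * 0 + 1 by rfl, th_odd, E_zero]

lemma Psi_shift_le (n : ℕ) (g : ℕ → ℕ) (hg : g = E n ∨ g = flip (E n)) (m : ℕ) :
    seqLE (sh m (Psi g)) (Psi (E n)) := by
  have hb : IsBinary g := by
    rcases hg with rfl | rfl
    · exact E_bin n
    · exact flip_bin _
  have hs : ∀ i, g i = 0 → seqLE (sh i g) (E n) := by
    intro i hi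
    rcases hg with rfl | rfl
    · exact (E_shift_le n i).1 hi
    · rw [sh_flip]
      refine (E_shift_le n i).2 ?_
      have := E_bin n i
      simp only [flip] at hi
      omega
  obtain ⟨i, hi⟩ : ∃ i, m = 3 * i ∨ m = 3 * i + 1 ∨ m = 3 * i + 2 := ⟨m / 3, by omega⟩
  rcases hi with rfl | rfl | rfl
  · by_cases h : g i = 0
    · rw [sh_Psi]
      exact Psi_monoLE (by rw [E_zero]; exact h) (hs i h)
    · refine seqLE_of_zero ?_ (Psi_zero n)
      have := hb i
      simp only [sh, add_zero, Psi0]; omega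
  · refine seqLE_of_zero ?_ (Psi_zero n)
    simp only [sh, add_zero, Psi1]
  · by_cases h : g (i + 1) = 0
    · refine seqLE_of_zero ?_ (Psi_zero n)
      simp only [sh, add_zero, Psi2, h]
    · have h1 : g (i + 1) = 1 := by have := hb (i + 1); omega
      cases n with
      | zero =>
        right
        rcases hg with rfl | rfl
        · simp [E] at h
        · funext m
          simp only [sh, Psi, flip, E]
          split_ifs <;> omega
      | succ n =>
        left
        have h0 : Psi g (3 * i + 2) = 1 := by rw [Psi2, h1]
        have h2 : Psi g (3 * i + 2 + 1) = 0 := by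
          rw [show 3 * i + 2 + 1 = 3 * (i + 1) by ring, Psi0, h1]
        have h3 : Psi g (3 * i + 2 + 2) = 0 := by
          rw [show 3 * i + 2 + 2 = 3 * (i + 1) + 1 by ring, Psi1]
        have k0 := Psi_zero (n + 1)
        have k1 : Psi (E (n + 1)) 1 = 0 := Psi1 _ 0
        have k2 : Psi (E (n + 1)) 2 = 1 := (Psi2 _ 0).trans (E_one n)
        refine ⟨2, fun j hj => ?_, ?_⟩
        · simp only [sh]
          interval_cases j
          · rw [k0]; exact h0
          · rw [k1, h2]
        · simp only [sh]; omega

lemma Dst_le (n : ℕ) (j : Fin 3) (m : ℕ) : seqLE (sh m (ind (Dst n) j)) (Psi (E n)) := by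
  fin_cases j
  · show seqLE (sh m (ind (Dst n) 0)) (Psi (E n))
    rw [ind_Dst0]; exact Psi_shift_le n _ (Or.inl rfl) m
  · show seqLE (sh m (ind (Dst n) 1)) (Psi (E n))
    rw [ind_Dst1]; exact Psi_shift_le n _ (Or.inr rfl) m
  · show seqLE (sh m (ind (Dst n) 2)) (Psi (E n))
    by_cases h : m % 3 = 1
    · have : sh m (ind (Dst n) 2) = Psi (E 0) := by
        funext i
        simp only [sh, ind, Dst_two, Psi, E]
        split_ifs <;> omega
      rw [this]
      refine Psi_monoLE (by rw [E_zero, E_zero]) ?_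
      cases n with
      | zero => exact Or.inr rfl
      | succ n =>
        left
        refine ⟨1, fun i hi => ?_, ?_⟩
        · have : i = 0 := by omega
          subst this; rw [E_zero, E_zero]
        · rw [E_one]; simp [E]
    · refine seqLE_of_zero ?_ (Psi_zero n)
      simp only [sh, ind, Dst_two, add_zero, if_neg h]

lemma per_mul {α : Type*} {f : ℕ → α} {p : ℕ} (h : ∀ i, f (i + p) = f i) (c i : ℕ) :
    f (i + c * p) = f i := by
  induction c with
  | zero => simp
  | succ c ih => rw [Nat.succ_mul, ← add_assoc, h, ih]

lemma E_minper (n p : ℕ) (hp : 0 < p) (hpn : p < 2 ^ n) (h : ∀ i, E n (i + p) = E n i) :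
    False := by
  obtain ⟨m, q, hq, rfl⟩ := Nat.exists_eq_two_pow_mul_odd hp.ne'
  obtain ⟨r, rfl⟩ := hq
  have hmn : m < n := by
    refine (Nat.pow_lt_pow_iff_right (a := 2) (by norm_num)).1 (lt_of_le_of_lt ?_ hpn)
    exact Nat.le_mul_of_pos_right _ (by omega)
  obtain ⟨s, rfl⟩ : ∃ s, n = m + s + 1 := ⟨n - m - 1, by omega⟩
  have h1 := per_mul h (2 ^ s) 0
  have h2 : 0 + 2 ^ s * (2 ^ m * (2 * r + 1)) = 2 ^ (m + s) + r * 2 ^ (m + s + 1) := by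
    rw [pow_succ, pow_add]; ring
  rw [h2, per_mul (E_per _), E_pow, E_zero] at h1
  omega

lemma Dst_smallest (n : ℕ) : SmallestPeriod (fun i => dig (Dst n i)) (3 * 2 ^ n) := by
  refine ⟨by positivity, fun i => ?_, fun j hj hjk => ?_⟩
  · refine congrArg dig (?_ : Dst n (i + 3 * 2 ^ n) = Dst n i)
    unfold Dst
    rw [show (i + 3 * 2 ^ n) % 3 = i % 3 by omega,
      show (i + 3 * 2 ^ n) / 3 = i / 3 + 2 ^ n by omega, E_per,
      show i / 3 + 2 ^ n + 1 = i / 3 + 1 + 2 ^ n by ring, E_per]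
  · by_contra hc
    push Not at hc
    have hD : ∀ i, Dst n (i + j) = Dst n i := fun i => dig_inj (hc i)
    have h3 : j % 3 = 0 := by
      have h1 := (Dst_two n 1).2 (by norm_num)
      rw [← hD 1, Dst_two] at h1
      omega
    obtain ⟨p, rfl⟩ : ∃ p, j = 3 * p := ⟨j / 3, by omega⟩
    refine E_minper n p (by omega) (by omega) fun i => ?_
    have h4 : ind (Dst n) 0 (3 * i + 3 * p) = ind (Dst n) 0 (3 * i) := by
      unfold ind; rw [hD]
    rw [ind_Dst0, ← mul_add, Psi0, Psi0] at h4
    have := E_bin n i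
    have := E_bin n (i + p)
    omega


/-- renormalization condition -/
def Cond (n : ℕ) (f : ℕ → ℕ) : Prop :=
  ∀ i, (f i = 0 → seqLT (sh i f) (E n)) ∧ (f i = 1 → seqLT (flip (sh i f)) (E n))

lemma not_lt_E (n : ℕ) (u : ℕ → ℕ) (r : ℕ) (h1 : u 1 = 1)
    (he : ∀ m, 1 ≤ m → m ≤ r + 1 → u (2 * m) = 1)
    (hl : u (2 * r + 3) = 1) : ¬ seqLT u (E (n + 1)) := by
  rintro ⟨m, hm, hlt⟩
  have hb := E_bin (n + 1)
  have hne : ∀ i, E (n + 1) (2 * i + 1) = 1 - E (n + 1) (2 * i) := fun i => by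
    rw [E_succ, th_odd, th_even]
  have hbm := hb m
  rcases Nat.even_or_odd' m with ⟨i, rfl | rfl⟩
  · by_cases hi0 : i = 0
    · subst hi0; rw [E_zero] at hlt; omega
    by_cases hi : i ≤ r + 1
    · have := he i (by omega) hi; omega
    · have a1 := hm (2 * (r + 1)) (by omega)
      have a2 := hm (2 * r + 3) (by omega)
      have a3 := hne (r + 1)
      have a4 := he (r + 1) (by omega) le_rfl
      rw [show 2 * (r + 1) + 1 = 2 * r + 3 by ring] at a3
      omega
  · by_cases hi0 : i = 0
    · subst hi0; simp only [mul_zero, zero_add] at hlt hbm; omega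
    by_cases hi : i ≤ r + 1
    · have a1 := hm (2 * i) (by omega)
      have a2 := he i (by omega) hi
      have a3 := hne i
      omega
    · have a1 := hm (2 * (r + 1)) (by omega)
      have a2 := hm (2 * r + 3) (by omega)
      have a3 := hne (r + 1)
      have a4 := he (r + 1) (by omega) le_rfl
      rw [show 2 * (r + 1) + 1 = 2 * r + 3 by ring] at a3
      omega

/-- Normal form of `Cond`: `f q ≠ f (q+1)`, all `f (q+2m)` equal to `f (q+1)`. -/
lemma cond_step {n : ℕ} {f : ℕ → ℕ} (hf : IsBinary f) (h : Cond (n + 1) f) (q r : ℕ)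
    (h1 : f (q + 1) ≠ f q)
    (he : ∀ m, 1 ≤ m → m ≤ r + 1 → f (q + 2 * m) = f (q + 1)) :
    f (q + 2 * (r + 1) + 1) ≠ f (q + 2 * (r + 1)) := by
  intro hc
  have hq := hf q
  have hq1 := hf (q + 1)
  have he' := he (r + 1) (by omega) le_rfl
  by_cases h0 : f q = 0
  · refine not_lt_E n _ r ?_ ?_ ?_ ((h q).1 h0)
    · simp only [sh]; omega
    · intro m hm hm2
      have := he m hm hm2
      simp only [sh]; omega
    · simp only [sh]
      rw [show q + (2 * r + 3) = q + 2 * (r + 1) + 1 by ring]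
      omega
  · refine not_lt_E n _ r ?_ ?_ ?_ ((h q).2 (by omega))
    · simp only [sh, flip]; omega
    · intro m hm hm2
      have := he m hm hm2
      simp only [sh, flip]; omega
    · simp only [sh, flip]
      rw [show q + (2 * r + 3) = q + 2 * (r + 1) + 1 by ring]
      omega

lemma cond_theta {n : ℕ} {f : ℕ → ℕ} (hf : IsBinary f) (h : Cond (n + 1) f)
    (hc : ∃ p, f (p + 1) ≠ f p) : ∃ s, ∀ i, f (s + 2 * i + 1) ≠ f (s + 2 * i) := by
  obtain ⟨p0, hp0⟩ := hc
  by_cases hex : ∃ p, f (p + 1) ≠ f p ∧ f (p + 2) = f (p + 1)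
  · obtain ⟨p, hp1, hp2⟩ := hex
    refine ⟨p, ?_⟩
    -- invariant
    have inv : ∀ i, ∃ q r, q + 2 * (r + 1) = p + 2 * (i + 1) ∧ f (q + 1) ≠ f q ∧
        ∀ m, 1 ≤ m → m ≤ r + 1 → f (q + 2 * m) = f (q + 1) := by
      intro i
      induction i with
      | zero =>
        refine ⟨p, 0, rfl, hp1, fun m hm hm2 => ?_⟩
        have : m = 1 := by omega
        subst this; exact hp2
      | succ i ih =>
        obtain ⟨q, r, hqr, h1, he⟩ := ih
        have hs := cond_step hf h q r h1 he
        have he' := he (r + 1) (by omega) le_rfl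
        by_cases hn : f (q + 2 * (r + 2)) = f (q + 1)
        · refine ⟨q, r + 1, by omega, h1, fun m hm hm2 => ?_⟩
          by_cases hm3 : m ≤ r + 1
          · exact he m hm hm3
          · have : m = r + 2 := by omega
            subst this; exact hn
        · refine ⟨q + 2 * (r + 1), 0, by omega, hs, fun m hm hm2 => ?_⟩
          have : m = 1 := by omega
          subst this
          have b1 := hf (q + 2 * (r + 2))
          have b2 := hf (q + 2 * (r + 1) + 1)
          have b3 := hf (q + 1)
          rw [show q + 2 * (r + 1) + 2 * 1 = q + 2 * (r + 2) by ring]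
          omega
    intro i
    cases i with
    | zero => exact hp1
    | succ i =>
      obtain ⟨q, r, hqr, h1, he⟩ := inv i
      have hs := cond_step hf h q r h1 he
      rw [hqr] at hs
      exact hs
  · push Not at hex
    have alt : ∀ i, f (p0 + i + 1) ≠ f (p0 + i) := by
      intro i
      induction i with
      | zero => exact hp0
      | succ i ih => exact hex _ ih
    exact ⟨p0, fun i => alt (2 * i)⟩

lemma cond_period (n : ℕ) (f : ℕ → ℕ) (hf : IsBinary f) (hp : ∀ i, f (i + 2 ^ n) = f i)
    (h : Cond n f) : 1 ≤ n ∧ ∀ i, f (i + 2 ^ (n - 1)) = f i := by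
  induction n generalizing f with
  | zero =>
    exfalso
    have hno : ∀ u, ¬ seqLT u (E 0) := by
      rintro u ⟨m, _, hlt⟩; simp [E] at hlt
    have := hf 0
    by_cases h0 : f 0 = 0
    · exact hno _ ((h 0).1 h0)
    · exact hno _ ((h 0).2 (by omega))
  | succ n ih =>
    refine ⟨by omega, ?_⟩
    rw [Nat.add_sub_cancel]
    by_cases hc : ∃ p, f (p + 1) ≠ f p
    · obtain ⟨s, hs⟩ := cond_theta hf h hc
      let g : ℕ → ℕ := fun i => f (s + 2 * i)
      have hg : IsBinary g := fun i => hf _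
      have hth : sh s f = th g := by
        funext i
        rcases Nat.even_or_odd' i with ⟨j, rfl | rfl⟩
        · rw [th_even]; rfl
        · rw [th_odd]
          have a := hs j
          have b1 := hf (s + 2 * j)
          have b2 := hf (s + 2 * j + 1)
          show f (s + (2 * j + 1)) = 1 - f (s + 2 * j)
          rw [← add_assoc]; omega
      have hsh : ∀ i, sh (s + 2 * i) f = th (sh i g) := fun i => by
        rw [← sh_sh, hth, sh_th]
      have hgc : Cond n g := by
        intro i
        constructor
        · intro h0
          have := (h (s + 2 * i)).1 h0
          rw [hsh, E_succ] at this
          exact th_reflect this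
        · intro h0
          have := (h (s + 2 * i)).2 h0
          rw [hsh, E_succ, flip_th (sh_bin hg i)] at this
          exact th_reflect this
      have hgp : ∀ i, g (i + 2 ^ n) = g i := fun i => by
        show f (s + 2 * (i + 2 ^ n)) = f (s + 2 * i)
        rw [← hp (s + 2 * i)]; congr 1; ring
      obtain ⟨hn, hgp'⟩ := ih g hg hgp hgc
      obtain ⟨m, rfl⟩ : ∃ m, n = m + 1 := ⟨n - 1, by omega⟩
      rw [Nat.add_sub_cancel] at hgp'
      have hthp : ∀ i, th g (i + 2 ^ (m + 1)) = th g i := fun i => by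
        unfold th
        rw [show (i + 2 ^ (m + 1)) % 2 = i % 2 by omega,
          show (i + 2 ^ (m + 1)) / 2 = i / 2 + 2 ^ m by omega, hgp']
      intro i
      have hle : s ≤ i + s * 2 ^ (m + 1 + 1) := by
        have : s * 1 ≤ s * 2 ^ (m + 1 + 1) := Nat.mul_le_mul_left _ Nat.one_le_two_pow
        omega
      obtain ⟨j, hj⟩ := Nat.exists_eq_add_of_le hle
      have h1 := hthp j
      rw [← hth] at h1
      simp only [sh] at h1
      rw [← add_assoc, ← hj, per_mul hp, show i + s * 2 ^ (m + 1 + 1) + 2 ^ (m + 1)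
        = i + 2 ^ (m + 1) + s * 2 ^ (m + 1 + 1) by ring, per_mul hp] at h1
      exact h1
    · push Not at hc
      intro i
      have : ∀ j, f (i + j) = f i := fun j => by
        induction j with
        | zero => rfl
        | succ j ihj => rw [← add_assoc, hc, ihj]
      exact this _


lemma words {n : ℕ} {x : ℕ → ℕ} (hx : IsBinary x) (h : seqLT x (Psi (E n))) (h0 : x 0 = 1) :
    x 1 = 0 ∧ (x 2 = 1 → x 3 = 0 ∧ x 4 = 0) ∧
      (x 2 = 1 → x 5 = 1 → x 6 = 0 ∧ x 7 = 0 ∧ x 8 = 0) := by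
  have a0 : Psi (E n) 0 = 1 := Psi_zero n
  have a1 : Psi (E n) 1 = 0 := Psi1 _ 0
  have a2 : Psi (E n) 2 = E n 1 := Psi2 _ 0
  have a3 : Psi (E n) 3 = 1 - E n 1 := Psi0 _ 1
  have a4 : Psi (E n) 4 = 0 := Psi1 _ 1
  have a5 : Psi (E n) 5 = E n 2 := Psi2 _ 1
  have a6 : Psi (E n) 6 = 1 - E n 2 := Psi0 _ 2
  have a7 : Psi (E n) 7 = 0 := Psi1 _ 2
  have a8 : Psi (E n) 8 = E n 3 := Psi2 _ 2
  have hE : (E n 1 = 0 ∧ E n 2 = 0) ∨ (E n 1 = 1 ∧ E n 2 = 0) ∨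
      (E n 1 = 1 ∧ E n 2 = 1 ∧ E n 3 = 0) := by
    rcases n with _ | _ | n
    · simp [E]
    · simp [E]
    · right; right
      refine ⟨E_one _, ?_, ?_⟩
      · exact (th_even _ 1).trans (E_one _)
      · exact (th_odd _ 1).trans (by rw [E_one])
  obtain ⟨m, hm, hlt⟩ := h
  have b1 := hx 1
  have b2 := hx 2
  have b3 := hx 3
  have b4 := hx 4
  have b5 := hx 5
  have b6 := hx 6
  have b7 := hx 7
  have b8 := hx 8
  have c0 := hm 0
  have c1 := hm 1
  have c2 := hm 2
  have c3 := hm 3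
  have c4 := hm 4
  have c5 := hm 5
  have c6 := hm 6
  have c7 := hm 7
  have c8 := hm 8
  clear hm
  by_cases h9 : m < 9
  · interval_cases m <;> omega
  · omega

/-- forbidden words -/
def Wd (x : ℕ → ℕ) : Prop := ∀ i, x i = 1 → x (i + 1) = 0 ∧
  (x (i + 2) = 1 → x (i + 3) = 0 ∧ x (i + 4) = 0) ∧
      (x (i + 2) = 1 → x (i + 5) = 1 → x (i + 6) = 0 ∧ x (i + 7) = 0 ∧ x (i + 8) = 0)

lemma Wd_of {n : ℕ} {x : ℕ → ℕ} (hx : IsBinary x) (h : ∀ m, seqLT (sh m x) (Psi (E n))) :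
    Wd x := fun i hi => words (sh_bin hx i) (h i) hi

/-- deficit walk -/
def Sd (x : ℕ → ℕ) (i : ℕ) : ℤ := ∑ m ∈ Finset.range i, (1 - 3 * (x m : ℤ))

lemma Sd_succ (x : ℕ → ℕ) (i : ℕ) : Sd x (i + 1) = Sd x i + (1 - 3 * (x i : ℤ)) :=
  Finset.sum_range_succ _ _

lemma Sd_per {x : ℕ → ℕ} {k : ℕ} (hp : ∀ i, x (i + k) = x i) (i : ℕ) :
    Sd x (i + k) = Sd x i + Sd x k := by
  induction i with
  | zero => simp [Sd]
  | succ i ih =>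
    rw [show i + 1 + k = i + k + 1 by ring, Sd_succ, Sd_succ, ih, hp]; ring

lemma max_step {x : ℕ → ℕ} (hx : IsBinary x) (hw : Wd x) {b : ℕ} (hM : ∀ i, Sd x i ≤ Sd x b) :
    ∃ l, 1 ≤ l ∧ (∀ i, Sd x i ≤ Sd x (b + 3 * l)) ∧ ∀ t < l, x (b + 3 * t + 1) = 0 := by
  have s1 := Sd_succ x b
  have s2 := Sd_succ x (b + 1)
  have s3 := Sd_succ x (b + 2)
  have s4 := Sd_succ x (b + 3)
  have s5 := Sd_succ x (b + 4)
  have s6 := Sd_succ x (b + 5)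
  have s7 := Sd_succ x (b + 6)
  have s8 := Sd_succ x (b + 7)
  have s9 := Sd_succ x (b + 8)
  simp only [add_assoc, Nat.reduceAdd] at s1 s2 s3 s4 s5 s6 s7 s8 s9
  have m1 := hM (b + 1)
  have hb := hx b
  have h1 : x b = 1 := by omega
  obtain ⟨w1, w2, w3⟩ := hw b h1
  have hb2 := hx (b + 2)
  have hb5 := hx (b + 5)
  by_cases h2 : x (b + 2) = 1
  · obtain ⟨w3', w4⟩ := w2 h2
    by_cases h5 : x (b + 5) = 1
    · obtain ⟨w6, w7, w8⟩ := w3 h2 h5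
      refine ⟨3, by omega, fun i => ?_, fun t ht => ?_⟩
      · have := hM i
        show Sd x i ≤ Sd x (b + 9)
        omega
      · interval_cases t
        · exact w1
        · exact w4
        · exact w7
    · refine ⟨2, by omega, fun i => ?_, fun t ht => ?_⟩
      · have := hM i
        have h5' : x (b + 5) = 0 := by omega
        show Sd x i ≤ Sd x (b + 6)
        omega
      · interval_cases t
        · exact w1
        · exact w4
  · refine ⟨1, by omega, fun i => ?_, fun t ht => ?_⟩
    · have := hM i
      have h2' : x (b + 2) = 0 := by omega
      show Sd x i ≤ Sd x (b + 3)
      omega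
    · interval_cases t
      exact w1

lemma dens {x : ℕ → ℕ} (hx : IsBinary x) (hw : Wd x) {k : ℕ} (hk : 0 < k)
    (hp : ∀ i, x (i + k) = x i) (hS : Sd x k ≤ 0) :
    Sd x k = 0 ∧ ∃ b, ∀ m, x (b + 3 * m + 1) = 0 := by
  obtain ⟨b, hb, hbm⟩ := Finset.exists_max_image (Finset.range k) (Sd x)
    ⟨0, Finset.mem_range.2 hk⟩
  have hM : ∀ i, Sd x i ≤ Sd x b := by
    intro i
    induction i using Nat.strong_induction_on with
    | _ i ih =>
      by_cases hi : i < k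
      · exact hbm i (Finset.mem_range.2 hi)
      · have h1 := ih (i - k) (by omega)
        have h2 := Sd_per hp (i - k)
        rw [show i - k + k = i by omega] at h2
        omega
  constructor
  · have hlarge : ∀ N, ∃ b, N ≤ b ∧ ∀ i, Sd x i ≤ Sd x b := by
      intro N
      induction N with
      | zero => exact ⟨b, by omega, hM⟩
      | succ N ih =>
        obtain ⟨c, hc, hcM⟩ := ih
        obtain ⟨l, hl, hlM, _⟩ := max_step hx hw hcM
        exact ⟨c + 3 * l, by omega, hlM⟩
    obtain ⟨c, hc, hcM⟩ := hlarge k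
    have h1 := hcM (c - k)
    have h2 := Sd_per hp (c - k)
    rw [show c - k + k = c by omega] at h2
    omega
  · refine ⟨b, fun m => ?_⟩
    clear hb hbm
    induction m using Nat.strong_induction_on generalizing b with
    | _ m ih =>
      obtain ⟨l, hl, hlM, hlz⟩ := max_step hx hw hM
      by_cases hm : m < l
      · exact hlz m hm
      · have := ih (m - l) (by omega) (b + 3 * l) hlM
        rw [show b + 3 * l + 3 * (m - l) + 1 = b + 3 * m + 1 by omega] at this
        exact this

lemma Sd_total (D : ℕ → Fin 3) (i : ℕ) :
    Sd (ind D 0) i + Sd (ind D 1) i + Sd (ind D 2) i = 0 := by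
  induction i with
  | zero => simp [Sd]
  | succ i ih =>
    simp only [Sd_succ]
    have : (ind D 0 i : ℤ) + ind D 1 i + ind D 2 i = 1 := by
      unfold ind
      generalize D i = j
      fin_cases j <;> simp
    linarith

lemma ind_eq_one {D : ℕ → Fin 3} {j : Fin 3} {i : ℕ} : ind D j i = 1 ↔ D i = j := by
  unfold ind; split_ifs <;> simp_all

lemma ind_eq_zero {D : ℕ → Fin 3} {j : Fin 3} {i : ℕ} : ind D j i = 0 ↔ D i ≠ j := by
  unfold ind; split_ifs <;> simp_all

/-- every component misses some residue class mod 3 -/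
lemma exists_residue {D : ℕ → Fin 3} (hw : ∀ j, Wd (ind D j)) {K : ℕ} (hK : 0 < K)
    (hp : ∀ i, D (i + 3 * K) = D i) (j : Fin 3) :
    ∃ r, r < 3 ∧ ∀ i, i % 3 = r → D i ≠ j := by
  have hpi : ∀ j i, ind D j (i + 3 * K) = ind D j i := fun j i => by unfold ind; rw [hp]
  have hd : ∀ j, Sd (ind D j) (3 * K) ≤ 0 → Sd (ind D j) (3 * K) = 0 ∧
      ∃ b, ∀ m, ind D j (b + 3 * m + 1) = 0 :=
    fun j => dens (ind_bin D j) (hw j) (by omega) (hpi j)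
  have ht := Sd_total D (3 * K)
  have hj : Sd (ind D j) (3 * K) ≤ 0 := by
    have d0 := fun h => (hd 0 h).1
    have d1 := fun h => (hd 1 h).1
    have d2 := fun h => (hd 2 h).1
    have e0 : 0 ≤ Sd (ind D 0) (3 * K) := by
      by_contra h; have := d0 (by omega); omega
    have e1 : 0 ≤ Sd (ind D 1) (3 * K) := by
      by_contra h; have := d1 (by omega); omega
    have e2 : 0 ≤ Sd (ind D 2) (3 * K) := by
      by_contra h; have := d2 (by omega); omega
    fin_cases j <;> simp <;> omega
  obtain ⟨_, b, hb⟩ := hd j hj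
  refine ⟨(b + 1) % 3, Nat.mod_lt _ (by norm_num), fun i hi => ?_⟩
  have h1 := per_mul hp (b + 1) i
  have h2 : (b + 1) * 1 ≤ (b + 1) * K := Nat.mul_le_mul_left _ hK
  have h3 : (b + 1) * (3 * K) = 3 * ((b + 1) * K) := by ring
  rw [h3] at h1
  have h4 := hb ((i + 3 * ((b + 1) * K) - (b + 1)) / 3)
  rw [ind_eq_zero, show b + 3 * ((i + 3 * ((b + 1) * K) - (b + 1)) / 3) + 1
    = i + 3 * ((b + 1) * K) by omega, h1] at h4
  exact h4

lemma no_adj {D : ℕ → Fin 3} (hw : ∀ j, Wd (ind D j)) (i : ℕ) : D (i + 1) ≠ D i := by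
  have := (hw (D i) i (ind_eq_one.2 rfl)).1
  exact ind_eq_zero.1 this

/-- some component is constant on a residue class -/
lemma exists_const {D : ℕ → Fin 3} (hw : ∀ j, Wd (ind D j)) {K : ℕ} (hK : 0 < K)
    (hp : ∀ i, D (i + 3 * K) = D i) : ∃ q c, ∀ m, D (q + 3 * m) = c := by
  choose r hr3 hr using exists_residue hw hK hp
  by_cases hinj : Function.Injective r
  · -- distinct residues
    have hsurj : ∀ t < 3, ∃ j, r j = t := by
      intro t ht
      let r' : Fin 3 → Fin 3 := fun j => ⟨r j, hr3 j⟩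
      have hi : Function.Injective r' := fun a b h => hinj (by simpa [r'] using h)
      obtain ⟨j, hj⟩ := (Finite.injective_iff_surjective.1 hi) ⟨t, ht⟩
      exact ⟨j, by simpa [r'] using hj⟩
    have hc' : ∀ i : ℕ, ∃ j, r j = i % 3 := fun i => hsurj _ (Nat.mod_lt _ (by norm_num))
    choose c hc using hc'
    have hcp : ∀ i, c (i + 3) = c i := fun i => hinj (by rw [hc, hc]; omega)
    have hD : ∀ i, D i ≠ c i := fun i => hr _ i (hc i).symm
    have hne1 : ∀ i, c (i + 1) ≠ c i := fun i h => by
      have := congrArg r h; rw [hc, hc] at this; omega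
    have hne2 : ∀ i, c (i + 2) ≠ c i := fun i h => by
      have := congrArg r h; rw [hc, hc] at this; omega
    have three : ∀ a b d x : Fin 3, b ≠ a → d ≠ a → d ≠ b → x ≠ a → x ≠ b → x = d := by decide
    by_cases hex : ∃ i, D i = c (i + 2)
    · obtain ⟨i, hi⟩ := hex
      have hall : ∀ m, D (i + m) = c (i + m + 2) := by
        intro m
        induction m with
        | zero => exact hi
        | succ m ih =>
          have h1 := hD (i + m + 1)
          have h2 := no_adj hw (i + m)
          rw [ih] at h2
          have h3 := three (c (i + m + 1)) (c (i + m + 2)) (c (i + m)) (D (i + m + 1))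
            (hne1 _) (hne1 _).symm (hne2 _).symm h1 h2
          rw [← add_assoc, h3]
          exact (hcp _).symm
      refine ⟨i, c (i + 2), fun m => ?_⟩
      rw [hall]
      have := per_mul hcp m (i + 2)
      rw [← this]; congr 1; ring
    · push Not at hex
      have hall : ∀ i, D i = c (i + 1) := fun i =>
        three (c i) (c (i + 2)) (c (i + 1)) (D i) (hne2 _) (hne1 _) (hne1 (i + 1)).symm (hD i)
          (hex i)
      refine ⟨0, c 1, fun m => ?_⟩
      rw [hall]
      have := per_mul hcp m 1
      rw [← this]; congr 1; ring
  · have : ∃ a b, r a = r b ∧ a ≠ b := by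
      by_contra hcon
      push Not at hcon
      exact hinj fun a b h => hcon a b h
    obtain ⟨a, b, hab, hne⟩ := this
    have three : ∀ a b : Fin 3, a ≠ b → ∃ d, ∀ x : Fin 3, x ≠ a → x ≠ b → x = d := by decide
    obtain ⟨d, hd⟩ := three a b hne
    refine ⟨r a, d, fun m => hd _ (hr a _ ?_) (hr b _ ?_)⟩
    · have := hr3 a; omega
    · have := hr3 a; omega

/-- lower bound lemma -/
lemma lower {n : ℕ} {D : ℕ → Fin 3} (hp : ∀ i, D (i + 3 * 2 ^ n) = D i)
    (H : ∀ j m, seqLT (sh m (ind D j)) (Psi (E n))) :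
    1 ≤ n ∧ ∀ i, D (i + 3 * 2 ^ (n - 1)) = D i := by
  have hw : ∀ j, Wd (ind D j) := fun j => Wd_of (ind_bin D j) (H j)
  obtain ⟨q, C, hC⟩ := exists_const hw (by positivity) hp
  -- shift so that C sits at residue 1
  obtain ⟨s, hs⟩ : ∃ s, s = q + 2 := ⟨_, rfl⟩
  have hC1 : ∀ i, D (s + 3 * i + 1) = C := fun i => by
    rw [hs, ← hC (i + 1)]; congr 1; ring
  have adj := no_adj hw
  have hC0 : ∀ i, D (s + 3 * i) ≠ C := fun i h => adj (s + 3 * i) (by rw [hC1, h])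
  have hC2 : ∀ i, D (s + 3 * i + 2) ≠ C := fun i h => adj (s + 3 * i + 1) (by rw [hC1]; exact h)
  have h23 : ∀ i, D (s + 3 * (i + 1)) ≠ D (s + 3 * i + 2) := fun i => adj (s + 3 * i + 2)
  have hAB : ∀ C : Fin 3, ∃ A B : Fin 3, A ≠ C ∧ B ≠ C ∧ A ≠ B ∧
    ∀ x, x ≠ C → (x = A ∨ x = B) := by decide
  obtain ⟨A, B, hA, hB, hne, hx⟩ := hAB C
  let f : ℕ → ℕ := fun i => if D (s + 3 * i) = A then 0 else 1
  have hf : IsBinary f := fun i => by simp only [f]; split_ifs <;> omega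
  have hPA : sh s (ind D A) = Psi f := by
    funext m
    obtain ⟨i, hi⟩ : ∃ i, m = 3 * i ∨ m = 3 * i + 1 ∨ m = 3 * i + 2 := ⟨m / 3, by omega⟩
    rcases hi with rfl | rfl | rfl
    · rw [Psi0]; simp only [sh, ind, f]; split_ifs <;> rfl
    · rw [Psi1]; simp only [sh, ind]; rw [← add_assoc, hC1, if_neg hA.symm]
    · rw [Psi2]; simp only [sh, ind, f]; rw [← add_assoc]
      have h1 := h23 i
      rcases hx _ (hC2 i) with h2 | h2 <;> rcases hx _ (hC0 (i + 1)) with h3 | h3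
      · exact absurd (h3.trans h2.symm) h1
      · rw [h2, h3]; simp [hne.symm]
      · rw [h2, h3]; simp [hne.symm]
      · exact absurd (h3.trans h2.symm) h1
  have hPB : sh s (ind D B) = Psi (flip f) := by
    funext m
    obtain ⟨i, hi⟩ : ∃ i, m = 3 * i ∨ m = 3 * i + 1 ∨ m = 3 * i + 2 := ⟨m / 3, by omega⟩
    rcases hi with rfl | rfl | rfl
    · rw [Psi0]; simp only [sh, ind, f, flip]
      rcases hx _ (hC0 i) with h3 | h3 <;> rw [h3] <;> simp [hne, hne.symm]
    · rw [Psi1]; simp only [sh, ind]; rw [← add_assoc, hC1, if_neg hB.symm]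
    · rw [Psi2]; simp only [sh, ind, f, flip]; rw [← add_assoc]
      have h1 := h23 i
      rcases hx _ (hC2 i) with h2 | h2 <;> rcases hx _ (hC0 (i + 1)) with h3 | h3
      · exact absurd (h3.trans h2.symm) h1
      · rw [h2, h3]; simp [hne, hne.symm]
      · rw [h2, h3]; simp
      · exact absurd (h3.trans h2.symm) h1
  have hfp : ∀ i, f (i + 2 ^ n) = f i := fun i => by
    simp only [f]
    rw [show s + 3 * (i + 2 ^ n) = s + 3 * i + 3 * 2 ^ n by ring, hp]
  have hcond : Cond n f := by
    intro i
    constructor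
    · intro h0
      have h1 := H A (s + 3 * i)
      rw [← sh_sh, hPA, sh_Psi] at h1
      exact Psi_reflect (by rw [E_zero]; exact h0) h1
    · intro h0
      have h1 := H B (s + 3 * i)
      rw [← sh_sh, hPB, sh_Psi, sh_flip] at h1
      refine Psi_reflect ?_ h1
      rw [E_zero]; simp only [flip, sh, add_zero, h0]
  obtain ⟨hn, hper⟩ := cond_period n f hf hfp hcond
  refine ⟨hn, ?_⟩
  obtain ⟨k, rfl⟩ : ∃ k, n = k + 1 := ⟨n - 1, by omega⟩
  rw [Nat.add_sub_cancel] at hper ⊢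
  -- period of all components from s on
  have hpA : ∀ m, ind D A (s + m + 3 * 2 ^ k) = ind D A (s + m) := fun m => by
    have := Psi_per hper m
    rw [← hPA] at this
    simpa only [sh, add_assoc] using this
  have hpB : ∀ m, ind D B (s + m + 3 * 2 ^ k) = ind D B (s + m) := fun m => by
    have := Psi_per (f := flip f) (p := 2 ^ k) (fun i => by simp only [flip, hper]) m
    rw [← hPB] at this
    simpa only [sh, add_assoc] using this
  have hDs : ∀ m, D (s + m + 3 * 2 ^ k) = D (s + m) := by
    intro m
    have h1 := hpA m
    have h2 := hpB m
    have hall : ∀ x, x = A ∨ x = B ∨ x = C := fun x => by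
      by_cases h : x = C
      · exact Or.inr (Or.inr h)
      · rcases hx x h with h | h
        · exact Or.inl h
        · exact Or.inr (Or.inl h)
    rcases hall (D (s + m)) with h | h | h
    · rw [h]
      rw [ind_eq_one.2 h, ind_eq_one] at h1
      exact h1
    · rw [h]
      rw [ind_eq_one.2 h, ind_eq_one] at h2
      exact h2
    · have e1 : ind D A (s + m) = 0 := ind_eq_zero.2 (by rw [h]; exact hA.symm)
      have e2 : ind D B (s + m) = 0 := ind_eq_zero.2 (by rw [h]; exact hB.symm)
      rw [e1, ind_eq_zero] at h1
      rw [e2, ind_eq_zero] at h2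
      rcases hall (D (s + m + 3 * 2 ^ k)) with h' | h' | h'
      · exact absurd h' h1
      · exact absurd h' h2
      · rw [h, h']
  intro i
  have hle : s ≤ i + s * (3 * 2 ^ (k + 1)) := by
    have : s * 1 ≤ s * (3 * 2 ^ (k + 1)) := Nat.mul_le_mul_left _ (by
      have := Nat.one_le_two_pow (n := k + 1); omega)
    omega
  obtain ⟨m, hm⟩ := Nat.exists_eq_add_of_le hle
  have h1 := hDs m
  rw [← hm, per_mul hp, show i + s * (3 * 2 ^ (k + 1)) + 3 * 2 ^ k
    = i + 3 * 2 ^ k + s * (3 * 2 ^ (k + 1)) by ring, per_mul hp] at h1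
  exact h1

/-- the main theorem in terms of `Psi (E n)` -/
lemma main_aux (n : ℕ) : IsQuasiGreedy (betaK (3 * 2 ^ n)) (Psi (E n)) := by
  set a := Psi (E n) with ha_def
  have ha : IsBinary a := Psi_bin (E_bin n)
  have ha0 : a 0 = 1 := Psi_zero n
  have hap : ∀ i, a (i + 3 * 2 ^ n) = a i := Psi_per (E_per n)
  have hamax : ∀ m, seqLE (sh m a) a := fun m => by
    have := Dst_le n 0 m
    rwa [ind_Dst0] at this
  have hpow : 0 < 2 ^ n := by positivity
  obtain ⟨β, hβ1, hβ2, hβa⟩ := exists_base (k := 3 * 2 ^ n) (by omega) ha hap ha0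
    ⟨1, by omega, Psi1 _ 0⟩
  have hzero : NotEndInZeros a := fun N => ⟨0 + N * (3 * 2 ^ n), by
    have : N * 1 ≤ N * (3 * 2 ^ n) := Nat.mul_le_mul_left _ (by omega)
    omega, by rw [per_mul hap, ha0]; omega⟩
  have hup : ∀ γ, β < γ → γ ≤ 2 →
      γ ∈ {β : ℝ | β ∈ Set.Ioc (1 : ℝ) 2 ∧ ∃ d ∈ Ufat β, SmallestPeriod d (3 * 2 ^ n)} := by
    intro γ h1 h2
    have hγ : 1 < γ := hβ1.trans h1
    refine ⟨⟨hγ, h2⟩, fun i => dig (Dst n i), (mem_Ufat hγ _).2 fun m j _ => ?_, Dst_smallest n⟩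
    set x := sh (m + 1) (ind (Dst n) j) with hx_def
    have hx : IsBinary x := sh_bin (ind_bin _ _) _
    have hle : val β x ≤ 1 := val_le_one hβ1 ha hx hβa fun i => by
      rw [hx_def, sh_sh]; exact Dst_le n j _
    by_cases hz : ∃ i, x i ≠ 0
    · obtain ⟨i, hi⟩ := hz
      exact (val_strictAnti hβ1 h1 hx hi).trans_le hle
    · push Not at hz
      have : val γ x = 0 := by unfold val; simp [hz]
      rw [this]; norm_num
  have hlow : ∀ γ ∈ {β : ℝ | β ∈ Set.Ioc (1 : ℝ) 2 ∧
      ∃ d ∈ Ufat β, SmallestPeriod d (3 * 2 ^ n)}, β ≤ γ := by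
    rintro γ ⟨⟨hγ1, hγ2⟩, d, hd, hk, hper, hmin⟩
    by_contra hcon
    push Not at hcon
    choose D hD using fun i => exists_dig (hd.1 i)
    obtain rfl : d = fun i => dig (D i) := funext hD
    have hU := (mem_Ufat hγ1 D).1 hd
    have hDp : ∀ i, D (i + 3 * 2 ^ n) = D i := fun i => dig_inj (hper i)
    have hDmin : ∀ j, 0 < j → j < 3 * 2 ^ n → ¬ ∀ i, D (i + j) = D i := by
      intro j h1 h2 h3
      obtain ⟨i, hi⟩ := hmin j h1 h2
      exact hi (by simp only [h3])
    have hval : ∀ j m, val γ (sh m (ind D j)) < 1 := by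
      intro j m
      by_contra hv
      push Not at hv
      -- going back
      have hback : ∀ t, 1 ≤ val γ (sh (t + 1) (ind D j)) → D t = j ∧
          1 ≤ val γ (sh t (ind D j)) := by
        intro t ht
        have hDt : D t = j := by
          by_contra hne
          exact absurd (hU t j hne) (not_lt.2 ht)
        refine ⟨hDt, ?_⟩
        rw [val_cons hγ1 (sh_bin (ind_bin D j) t), sh_sh]
        have : sh t (ind D j) 0 = 1 := ind_eq_one.2 hDt
        rw [this, le_div_iff₀ (by linarith)]
        push_cast
        linarith
      have hdown : ∀ t, 1 ≤ val γ (sh t (ind D j)) → ∀ i < t, D i = j := by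
        intro t
        induction t with
        | zero => intro _ i hi; omega
        | succ t ih =>
          intro ht i hi
          obtain ⟨h1, h2⟩ := hback t ht
          by_cases hit : i = t
          · rw [hit]; exact h1
          · exact ih h2 i (by omega)
      have hall : ∀ i, D i = j := by
        intro i
        have hsp : sh (m + (i + 1) * (3 * 2 ^ n)) (ind D j) = sh m (ind D j) := by
          funext u
          simp only [sh, ind]
          rw [show m + (i + 1) * (3 * 2 ^ n) + u = m + u + (i + 1) * (3 * 2 ^ n) by ring,
            per_mul hDp]
        refine hdown (m + (i + 1) * (3 * 2 ^ n)) (by rw [hsp]; exact hv) i ?_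
        have : (i + 1) * 1 ≤ (i + 1) * (3 * 2 ^ n) := Nat.mul_le_mul_left _ (by omega)
        omega
      exact hDmin 1 (by omega) (by omega) fun i => by rw [hall, hall]
    have hlt : ∀ j m, seqLT (sh m (ind D j)) a := by
      intro j m
      have hb : IsBinary (sh m (ind D j)) := sh_bin (ind_bin D j) m
      have h1 : val β (sh m (ind D j)) < 1 :=
        (val_anti hγ1 hcon.le hb).trans_lt (hval j m)
      rcases seqLT_tri (sh m (ind D j)) a with h | h | h
      · exact h
      · rw [h, hβa] at h1; exact absurd h1 (lt_irrefl _)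
      · obtain ⟨p, hp⟩ := one_le_val hβ1 ha hb hβa hamax h
        have h2 := val_nonneg hβ1 (sh p (sh m (ind D j)))
        have h3 : 0 ≤ val β (sh p (sh m (ind D j))) / β ^ p := by positivity
        linarith
    obtain ⟨hn, hP⟩ := lower hDp hlt
    obtain ⟨k, rfl⟩ : ∃ k, n = k + 1 := ⟨n - 1, by omega⟩
    rw [Nat.add_sub_cancel] at hP
    have hk2 : 0 < 2 ^ k := by positivity
    exact hDmin (3 * 2 ^ k) (by omega) (by rw [pow_succ]; omega) hP
  have hbeta : betaK (3 * 2 ^ n) = β := by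
    unfold betaK
    refine le_antisymm ?_ ?_
    · refine le_of_forall_gt_imp_ge_of_dense fun γ hγ => ?_
      have hmem := hup (min γ 2) (lt_min hγ hβ2) (min_le_right _ _)
      exact (csInf_le ⟨β, hlow⟩ hmem).trans (min_le_left _ _)
    · exact le_csInf ⟨2, hup 2 hβ2 le_rfl⟩ hlow
  rw [hbeta]
  exact quasiGreedy_of hβ1 ha hzero hβa hamax

/-- δ(β_{3·2ⁿ}) = (t_{n+1})^∞ for every n ≥ 0 (here `tB n = t_{n+1}`). -/
theorem stmt1 (n : ℕ) :
    FatSierpinski.IsQuasiGreedy (FatSierpinski.betaK (3 * 2 ^ n))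
      (FatSierpinski.periodicSeq (FatSierpinski.tB n)) := by
  rw [periodicSeq_eq]
  exact main_aux n

end FatSierpinski
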